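/- arXiv:2501.14421 — 2 statements merged into one kernel-verified Lean document; each statement's English description precedes it below -/
import Mathlib

section
/- Correctness of snapshot reads as a list lemma: if Cut t H₁ H, then scanning H from the most recent element for the first pair whose timestamp is strictly less than t yields exactly the last element of the prefix H₁, i.e., H.reverse.find? (fun p => p.2 < t) = H₁.getLast?; in particular the scan returns none if and only if H₁ = []. -/
/-- `Cut t H₁ H`: the timestamp `t` cuts the history `H` with prefix `H₁`. -/
def Cut {V : Type*} (t : ℕ) (H₁ H : List (V × ℕ)) : Prop :=
  ∃ H₂ : List (V × ℕ), H = H₁ ++ H₂ ∧ (∀ p ∈ H₁, p.2 < t) ∧ (∀ p ∈ H₂, t < p.2)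

theorem cut_read_correct {V : Type*} (t : ℕ) (H₁ H : List (V × ℕ))
    (h : Cut t H₁ H) :
    H.reverse.find? (fun p => p.2 < t) = H₁.getLast? ∧
    (H.reverse.find? (fun p => p.2 < t) = none ↔ H₁ = []) := by
  have key : H.reverse.find? (fun p => p.2 < t) = H₁.getLast? := by
    obtain ⟨H₂, rfl, h1, h2⟩ := h
    have e : H₂.reverse.find? (fun p => decide (p.2 < t)) = none := by
      rw [List.find?_eq_none]
      intro p hp
      have := h2 p (List.mem_reverse.mp hp)
      simp only [decide_eq_true_eq]
      omega
    rw [List.reverse_append, List.find?_append, e, Option.none_or]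
    rcases List.eq_nil_or_concat H₁ with rfl | ⟨L, a, rfl⟩
    · simp
    · have ha : a.2 < t := h1 a (by simp)
      simp [ha]
  refine ⟨key, ?_⟩
  rw [key, List.getLast?_eq_none_iff]
end

section
/- Monotonicity of snapshots: if Cut t H₁ H and Cut t' H₁' H with t ≤ t', then H₁ is a prefix of H₁' (H₁ <+: H₁'). That is, the start snapshot taken at an earlier start timestamp is a prefix of the start snapshot taken at a later start timestamp of the same key's history. -/
theorem cut_mono {V : Type*} (t t' : ℕ) (H H₁ H₁' : List (V × ℕ))
    (h1 : Cut t H₁ H) (h2 : Cut t' H₁' H) (htt' : t ≤ t') : H₁ <+: H₁' := by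
  obtain ⟨H₂, rfl, ha, hb⟩ := h1
  obtain ⟨H₂', he, hc, hd⟩ := h2
  rcases List.append_eq_append_iff.mp he with ⟨a, h, _⟩ | ⟨c, h, h'⟩
  · exact ⟨a, h.symm⟩
  · cases c with
    | nil => simp [h]
    | cons p c =>
      have h3 := ha p (by simp [h])
      have h4 := hd p (by simp [h'])
      omega
end
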